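/- Let n ≥ 2, A the Cartan matrix of type A_n, and ι an admissible sequence adapted to A. For every tableau T = [j_1,…,j_k]^A_s ∈ Tab_{A,ι}, every m ≥ 1 and every j ∈ I: (a) if there exists i ∈ [1,k] with j_i = j, j_{i+1} ≠ j+1 and m = s+k−i+P(j), then S_{m,j}T = [j_1,…,j_{i−1}, j+1, j_{i+1},…,j_k]^A_s; (b) if there exists i ∈ [1,k] with j_i = j+1, j_{i−1} ≠ j and m = s+k−i+1+P(j), then S_{m,j}T = [j_1,…,j_{i−1}, j, j_{i+1},…,j_k]^A_s; (c) otherwise S_{m,j}T = T. In particular, Tab_{A,ι} is closed under all operators S_{m,j}. -/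

import Mathlib

noncomputable section

/-- The coordinate linear form `x_k` (as a coefficient vector). -/
def xc (k : ℕ) : ℕ → ℚ := fun l => if l = k then 1 else 0

/-- Cartan matrix of type `A_n`. -/
def cartanA (_n : ℕ) (i j : ℕ) : ℤ :=
  if i = j then 2 else if i + 1 = j ∨ j + 1 = i then -1 else 0

/-- Cartan matrix of type `B_n`. -/
def cartanB (n : ℕ) (i j : ℕ) : ℤ :=
  if i = j then 2
  else if i = n ∧ j = n - 1 then -2
  else if i + 1 = j ∨ j + 1 = i then -1 else 0

/-- Cartan matrix of type `C_n`. -/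
def cartanC (n : ℕ) (i j : ℕ) : ℤ :=
  if i = j then 2
  else if i = n - 1 ∧ j = n then -2
  else if i + 1 = j ∨ j + 1 = i then -1 else 0

/-- Cartan matrix of type `D_n`. -/
def cartanD (n : ℕ) (i j : ℕ) : ℤ :=
  if i = j then 2
  else if (i = n - 1 ∧ j = n) ∨ (i = n ∧ j = n - 1) then 0
  else if (i + 1 = j ∨ j + 1 = i) ∨ (i = n ∧ j = n - 2) ∨ (i = n - 2 ∧ j = n) then -1
  else 0

/-- `ι` (with positions indexed by `k ≥ 1`) takes values in `{1,…,n}`, has no two equal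
consecutive entries, and every index occurs infinitely often. -/
def Admissible (n : ℕ) (ι : ℕ → ℕ) : Prop :=
  (∀ k, 1 ≤ k → 1 ≤ ι k ∧ ι k ≤ n) ∧
  (∀ k, 1 ≤ k → ι k ≠ ι (k + 1)) ∧
  (∀ i, 1 ≤ i → i ≤ n → ∀ N, ∃ k, N ≤ k ∧ ι k = i)

/-- `k^+`: the next position after `k` carrying the same letter. -/
def kplus (ι : ℕ → ℕ) (k : ℕ) : ℕ := sInf {l | k < l ∧ ι l = ι k}

/-- `k^-`: the previous position (`≥ 1`) carrying the same letter, `0` if none. -/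
def kminus (ι : ℕ → ℕ) (k : ℕ) : ℕ := sSup {l | 0 < l ∧ l < k ∧ ι l = ι k}

/-- The linear form `β_k` (with `β_0 = 0`). -/
def beta (A : ℕ → ℕ → ℤ) (ι : ℕ → ℕ) (k : ℕ) : ℕ → ℚ :=
  if k = 0 then 0
  else xc k + (∑ j ∈ Finset.Ioo k (kplus ι k), (A (ι k) (ι j) : ℚ) • xc j) + xc (kplus ι k)

/-- The piecewise-linear operator `S_k`. -/
def Sop (A : ℕ → ℕ → ℤ) (ι : ℕ → ℕ) (k : ℕ) (φ : ℕ → ℚ) : ℕ → ℚ :=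
  if 0 < φ k then φ - φ k • beta A ι k
  else φ - φ k • beta A ι (kminus ι k)

/-- Membership in `Ξ_ι`: forms obtained from some `x_{j_0}` by finitely many operators `S_k`. -/
inductive XiMem (A : ℕ → ℕ → ℤ) (ι : ℕ → ℕ) : (ℕ → ℚ) → Prop
  | base (k : ℕ) (hk : 1 ≤ k) : XiMem A ι (xc k)
  | step (k : ℕ) (hk : 1 ≤ k) (φ : ℕ → ℚ) (h : XiMem A ι φ) : XiMem A ι (Sop A ι k φ)

/-- The set `Ξ_ι`. -/
def Xi (A : ℕ → ℕ → ℤ) (ι : ℕ → ℕ) : Set (ℕ → ℚ) := { φ | XiMem A ι φ }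

/-- Forms obtained from a set `g` of generators by finitely many operators `S_k`. -/
inductive XiMemFrom (A : ℕ → ℕ → ℤ) (ι : ℕ → ℕ) (g : Set (ℕ → ℚ)) : (ℕ → ℚ) → Prop
  | base (φ : ℕ → ℚ) (h : φ ∈ g) : XiMemFrom A ι g φ
  | step (k : ℕ) (hk : 1 ≤ k) (φ : ℕ → ℚ) (h : XiMemFrom A ι g φ) :
      XiMemFrom A ι g (Sop A ι k φ)

/-- `ι` is adapted to the Cartan matrix `A`: for `i ≠ j` with `a_{i,j} ≠ 0`, consecutive
members of the subsequence of `ι` consisting of the letters `i`, `j` are distinct. -/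
def Adapted (n : ℕ) (A : ℕ → ℕ → ℤ) (ι : ℕ → ℕ) : Prop :=
  ∀ i j, 1 ≤ i → i ≤ n → 1 ≤ j → j ≤ n → i ≠ j → A i j ≠ 0 →
    ∀ k l, 1 ≤ k → k < l → (ι k = i ∨ ι k = j) → (ι l = i ∨ ι l = j) →
      (∀ m, k < m → m < l → ι m ≠ i ∧ ι m ≠ j) → ι k ≠ ι l

/-- Position of the first occurrence of the letter `i` in `ι`. -/
def firstOcc (ι : ℕ → ℕ) (i : ℕ) : ℕ := sInf {k | 1 ≤ k ∧ ι k = i}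

/-- `p_{i,j} = 1` iff the first occurrence of `i` precedes the first occurrence of `j`. -/
def pval (ι : ℕ → ℕ) (i j : ℕ) : ℕ := if firstOcc ι i < firstOcc ι j then 1 else 0

/-- The function `P(k)` for types A, B, C (and `P(k) = 0` for `k > n`, `k ≤ 1`). -/
def PABC (ι : ℕ → ℕ) (n k : ℕ) : ℕ :=
  if k ≤ n then ∑ t ∈ Finset.Icc 2 k, pval ι t (t - 1) else 0

/-- The function `P(k)` for type D. -/
def PD (ι : ℕ → ℕ) (n k : ℕ) : ℕ :=
  if k = n then (∑ t ∈ Finset.Icc 2 (n - 2), pval ι t (t - 1)) + pval ι n (n - 2)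
  else if k ≤ n then ∑ t ∈ Finset.Icc 2 k, pval ι t (t - 1) else 0

/-- `occPos ι j s`: the position of the `s`-th occurrence of the letter `j` in `ι`
(`0` for `s = 0`). -/
def occPos (ι : ℕ → ℕ) (j : ℕ) : ℕ → ℕ
  | 0 => 0
  | s + 1 => sInf {k | occPos ι j s < k ∧ ι k = j}

/-- The double-indexed coordinate form `x_{s,j}`, with the conventions
`x_{s,0} = x_{s,n+1} = 0` and `x_{s,j} = 0` for `s ≤ 0`. -/
def xsj (ι : ℕ → ℕ) (n : ℕ) (s : ℤ) (j : ℕ) : ℕ → ℚ :=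
  if 1 ≤ s ∧ 1 ≤ j ∧ j ≤ n then xc (occPos ι j s.toNat) else 0

/-- The double-indexed form `β_{s,j}`. -/
def betasj (A : ℕ → ℕ → ℤ) (ι : ℕ → ℕ) (s : ℤ) (j : ℕ) : ℕ → ℚ :=
  beta A ι (occPos ι j s.toNat)

/-- The double-indexed operator `S_{m,j}`. -/
def Ssj (A : ℕ → ℕ → ℤ) (ι : ℕ → ℕ) (m j : ℕ) (φ : ℕ → ℚ) : ℕ → ℚ :=
  Sop A ι (occPos ι j m) φ

/- Entries of the ordered sets `J_X` are encoded as natural numbers: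
an unbarred entry `j ∈ {1,…,n}` is encoded as `j`, a barred entry `j̄` is
encoded as `2n+1-j` (so that `n̄ = n+1, …, 1̄ = 2n` and the total order of
`J_B = J_C` is the numerical order), and the extra symbol `ovl(n+1)` of
types C and D is encoded as `0`. -/

/-- The box of type A. -/
def boxA (ι : ℕ → ℕ) (n : ℕ) (s : ℤ) (j : ℕ) : ℕ → ℚ :=
  xsj ι n (s + (PABC ι n j : ℤ)) j - xsj ι n (s + (PABC ι n (j - 1) : ℤ) + 1) (j - 1)

/-- The box of type B. -/
def boxB (ι : ℕ → ℕ) (n : ℕ) (s : ℤ) (e : ℕ) : ℕ → ℚ :=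
  if e ≤ n then
    xsj ι n (s + (PABC ι n e : ℤ)) e - xsj ι n (s + (PABC ι n (e - 1) : ℤ) + 1) (e - 1)
  else
    xsj ι n (s + (PABC ι n (2 * n - e) : ℤ) + (n : ℤ) - ((2 * n + 1 - e : ℕ) : ℤ) + 1)
        (2 * n - e)
      - xsj ι n (s + (PABC ι n (2 * n + 1 - e) : ℤ) + (n : ℤ) - ((2 * n + 1 - e : ℕ) : ℤ) + 1)
          (2 * n + 1 - e)

/-- The box of type C (`ovl(n+1)` encoded as `0`). -/
def boxC (ι : ℕ → ℕ) (n : ℕ) (s : ℤ) (e : ℕ) : ℕ → ℚ :=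
  if e = 0 then xsj ι n (s + (PABC ι n n : ℤ)) n
  else if e < n then
    xsj ι n (s + (PABC ι n e : ℤ)) e - xsj ι n (s + (PABC ι n (e - 1) : ℤ) + 1) (e - 1)
  else if e = n then
    (2 : ℚ) • xsj ι n (s + (PABC ι n n : ℤ)) n
      - xsj ι n (s + (PABC ι n (n - 1) : ℤ) + 1) (n - 1)
  else if e = n + 1 then
    xsj ι n (s + (PABC ι n (n - 1) : ℤ) + 1) (n - 1)
      - (2 : ℚ) • xsj ι n (s + (PABC ι n n : ℤ) + 1) n
  else
    xsj ι n (s + (PABC ι n (2 * n - e) : ℤ) + (n : ℤ) - ((2 * n + 1 - e : ℕ) : ℤ) + 1)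
        (2 * n - e)
      - xsj ι n (s + (PABC ι n (2 * n + 1 - e) : ℤ) + (n : ℤ) - ((2 * n + 1 - e : ℕ) : ℤ) + 1)
          (2 * n + 1 - e)

/-- The box of type D (`ovl(n+1)` encoded as `0`, `n̄` as `n+1`, `ovl(n-1)` as `n+2`). -/
def boxD (ι : ℕ → ℕ) (n : ℕ) (s : ℤ) (e : ℕ) : ℕ → ℚ :=
  if e = 0 then xsj ι n (s + (PD ι n n : ℤ)) n
  else if e ≤ n - 2 then
    xsj ι n (s + (PD ι n e : ℤ)) e - xsj ι n (s + (PD ι n (e - 1) : ℤ) + 1) (e - 1)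
  else if e = n - 1 then
    xsj ι n (s + (PD ι n (n - 1) : ℤ)) (n - 1) + xsj ι n (s + (PD ι n n : ℤ)) n
      - xsj ι n (s + (PD ι n (n - 2) : ℤ) + 1) (n - 2)
  else if e = n then
    xsj ι n (s + (PD ι n n : ℤ)) n - xsj ι n (s + (PD ι n (n - 1) : ℤ) + 1) (n - 1)
  else if e = n + 1 then
    xsj ι n (s + (PD ι n (n - 1) : ℤ)) (n - 1) - xsj ι n (s + (PD ι n n : ℤ) + 1) n
  else if e = n + 2 then
    xsj ι n (s + (PD ι n (n - 2) : ℤ) + 1) (n - 2)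
      - xsj ι n (s + (PD ι n (n - 1) : ℤ) + 1) (n - 1)
      - xsj ι n (s + (PD ι n n : ℤ) + 1) n
  else
    xsj ι n (s + (PD ι n (2 * n - e) : ℤ) + (n : ℤ) - ((2 * n + 1 - e : ℕ) : ℤ)) (2 * n - e)
      - xsj ι n (s + (PD ι n (2 * n + 1 - e) : ℤ) + (n : ℤ) - ((2 * n + 1 - e : ℕ) : ℤ))
          (2 * n + 1 - e)

/-- The column tableau `[j_1,…,j_k]_s = Σ_{i=1}^k box_{s+k-i}(j_i)`. -/
def tab (box : ℤ → ℕ → ℕ → ℚ) (s : ℤ) (k : ℕ) (j : ℕ → ℕ) : ℕ → ℚ :=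
  ∑ i ∈ Finset.Icc 1 k, box (s + (k : ℤ) - (i : ℤ)) (j i)

/-- The set `Tab_{A,ι}`. -/
def TabA (ι : ℕ → ℕ) (n : ℕ) : Set (ℕ → ℚ) :=
  { T | ∃ (k : ℕ) (s : ℤ) (j : ℕ → ℕ),
      1 ≤ k ∧ k ≤ n ∧
      (∀ i, 1 ≤ i → i ≤ k → 1 ≤ j i ∧ j i ≤ n + 1) ∧
      (∀ i, 1 ≤ i → i < k → j i < j (i + 1)) ∧
      1 - (PABC ι n k : ℤ) ≤ s ∧
      T = tab (boxA ι n) s k j }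

/-- `|·|` on encoded entries of `J_B = J_C`. -/
def absJ (n e : ℕ) : ℕ := if e ≤ n then e else 2 * n + 1 - e

/-- The set `Tab_{B,ι}`. -/
def TabB (ι : ℕ → ℕ) (n : ℕ) : Set (ℕ → ℚ) :=
  { T | ∃ (k : ℕ) (s : ℤ) (j : ℕ → ℕ),
      1 ≤ k ∧ k ≤ n ∧
      (∀ i, 1 ≤ i → i ≤ k → 1 ≤ j i ∧ j i ≤ 2 * n) ∧
      (∀ i, 1 ≤ i → i < k → j i < j (i + 1)) ∧
      (k = n → ∀ l m, 1 ≤ l → l < m → m ≤ k → absJ n (j l) ≠ absJ n (j m)) ∧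
      1 - (PABC ι n k : ℤ) ≤ s ∧
      T = tab (boxB ι n) s k j }

/-- Defining conditions of `Tab_{C,ι}` on the data `(k,s,j)`. -/
def TabCcond (ι : ℕ → ℕ) (n : ℕ) (k : ℕ) (s : ℤ) (j : ℕ → ℕ) : Prop :=
  (1 ≤ k ∧ k ≤ n - 1 ∧
    (∀ i, 1 ≤ i → i ≤ k → 1 ≤ j i ∧ j i ≤ 2 * n) ∧
    (∀ i, 1 ≤ i → i < k → j i < j (i + 1)) ∧
    1 - (PABC ι n k : ℤ) ≤ s)
  ∨
  (j 1 = 0 ∧ 1 ≤ k ∧ k ≤ n + 1 ∧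
    (∀ i, 2 ≤ i → i ≤ k → n + 1 ≤ j i ∧ j i ≤ 2 * n) ∧
    (∀ i, 2 ≤ i → i < k → j i < j (i + 1)) ∧
    1 - (PABC ι n n : ℤ) ≤ s)

/-- The set `Tab_{C,ι}`. -/
def TabC (ι : ℕ → ℕ) (n : ℕ) : Set (ℕ → ℚ) :=
  { T | ∃ k s j, TabCcond ι n k s j ∧ T = tab (boxC ι n) s k j }

/-- The partial order on (encoded) `J_D`: `a ≤ b` iff `a = b`, or `a < b` numerically and
`(a,b)` is not the incomparable pair `(n, n̄)`. -/
def leD (n a b : ℕ) : Prop := a = b ∨ (a < b ∧ ¬(a = n ∧ b = n + 1))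

/-- Defining conditions of `Tab_{D,ι}` on the data `(k,s,j)`. -/
def TabDcond (ι : ℕ → ℕ) (n : ℕ) (k : ℕ) (s : ℤ) (j : ℕ → ℕ) : Prop :=
  (1 ≤ k ∧ k ≤ n - 2 ∧
    (∀ i, 1 ≤ i → i ≤ k → 1 ≤ j i ∧ j i ≤ 2 * n) ∧
    (∀ i, 1 ≤ i → i < k → ¬ leD n (j (i + 1)) (j i)) ∧
    1 - (PD ι n k : ℤ) ≤ s)
  ∨
  (j 1 = 0 ∧ 1 ≤ k ∧ k ≤ n + 1 ∧
    (∀ i, 2 ≤ i → i ≤ k → n + 1 ≤ j i ∧ j i ≤ 2 * n) ∧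
    (∀ i, 2 ≤ i → i < k → j i < j (i + 1)) ∧
    (k % 2 = 0 → 1 - (PD ι n (n - 1) : ℤ) ≤ s) ∧
    (k % 2 = 1 → 1 - (PD ι n n : ℤ) ≤ s))

/-- The set `Tab_{D,ι}`. -/
def TabD (ι : ℕ → ℕ) (n : ℕ) : Set (ℕ → ℚ) :=
  { T | ∃ k s j, TabDcond ι n k s j ∧ T = tab (boxD ι n) s k j }

end

section helpers

variable {n : ℕ} {ι : ℕ → ℕ}

lemma occ_spec (hadm : Admissible n ι) {j : ℕ} (h1 : 1 ≤ j) (h2 : j ≤ n) (s : ℕ) :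
    occPos ι j s < occPos ι j (s + 1) ∧ ι (occPos ι j (s + 1)) = j := by
  have hne : {k | occPos ι j s < k ∧ ι k = j}.Nonempty := by
    obtain ⟨k, hk, hk'⟩ := hadm.2.2 j h1 h2 (occPos ι j s + 1)
    exact ⟨k, by simpa using ⟨hk, hk'⟩⟩
  have := Nat.sInf_mem hne
  simpa [occPos] using this

lemma occ_le {j s l : ℕ} (h : occPos ι j s < l) (hl : ι l = j) : occPos ι j (s + 1) ≤ l := by
  have : l ∈ {k | occPos ι j s < k ∧ ι k = j} := ⟨h, hl⟩
  simpa [occPos] using Nat.sInf_le this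

lemma occ_strictMono (hadm : Admissible n ι) {j : ℕ} (h1 : 1 ≤ j) (h2 : j ≤ n) :
    StrictMono (occPos ι j) :=
  strictMono_nat_of_lt_succ fun s => (occ_spec hadm h1 h2 s).1

lemma occ_pos (hadm : Admissible n ι) {j : ℕ} (h1 : 1 ≤ j) (h2 : j ≤ n) (s : ℕ) :
    0 < occPos ι j (s + 1) :=
  lt_of_le_of_lt (Nat.zero_le _) (occ_spec hadm h1 h2 s).1

lemma kplus_occ (hadm : Admissible n ι) {j : ℕ} (h1 : 1 ≤ j) (h2 : j ≤ n) (s : ℕ) :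
    kplus ι (occPos ι j (s + 1)) = occPos ι j (s + 2) := by
  rw [kplus, (occ_spec hadm h1 h2 s).2]
  rfl

lemma kminus_occ (hadm : Admissible n ι) {j : ℕ} (h1 : 1 ≤ j) (h2 : j ≤ n) (s : ℕ) :
    kminus ι (occPos ι j (s + 2)) = occPos ι j (s + 1) := by
  rw [kminus, (occ_spec hadm h1 h2 (s + 1)).2]
  apply IsGreatest.csSup_eq
  refine ⟨⟨occ_pos hadm h1 h2 s, (occ_spec hadm h1 h2 (s + 1)).1, (occ_spec hadm h1 h2 s).2⟩, ?_⟩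
  rintro l ⟨_, hl, hl'⟩
  by_contra hc
  push Not at hc
  have := occ_le hc hl'
  exact absurd hl (not_lt.2 this)

lemma interlace_step (hadm : Admissible n ι) (hadap : Adapted n (cartanA n) ι) {i j : ℕ}
    (hi1 : 1 ≤ i) (hi2 : i ≤ n) (hj1 : 1 ≤ j) (hj2 : j ≤ n) (hij : i + 1 = j ∨ j + 1 = i)
    {s t : ℕ} (h1 : occPos ι j t < occPos ι i (s + 1))
    (h2 : occPos ι i (s + 1) < occPos ι j (t + 1)) :
    occPos ι j (t + 1) < occPos ι i (s + 2) := by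
  by_contra hc
  push Not at hc
  have e1 := occ_spec hadm hi1 hi2 s
  have e2 := occ_spec hadm hi1 hi2 (s + 1)
  have e3 := occ_spec hadm hj1 hj2 t
  have hne : i ≠ j := by omega
  have hlt : occPos ι i (s + 2) < occPos ι j (t + 1) := by
    rcases hc.lt_or_eq with h | h
    · exact h
    · exfalso
      have := e2.2
      rw [h] at this
      omega
  refine hadap i j hi1 hi2 hj1 hj2 hne ?_ _ _ (occ_pos hadm hi1 hi2 s) e2.1
    (Or.inl e1.2) (Or.inl e2.2) ?_ (e1.2.trans e2.2.symm)
  · simp [cartanA, hne, hij]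
  · intro m hm1 hm2
    constructor
    · intro h
      have := occ_le hm1 h
      omega
    · intro h
      have := occ_le (h1.trans hm1) h
      exact absurd (hlt.trans_le this) (not_lt.2 hm2.le)

lemma firstOcc_eq (j : ℕ) : firstOcc ι j = occPos ι j 1 := by
  simp [firstOcc, occPos, Nat.succ_le_iff]

lemma interlace (hadm : Admissible n ι) (hadap : Adapted n (cartanA n) ι) {i j : ℕ}
    (hi1 : 1 ≤ i) (hi2 : i ≤ n) (hj1 : 1 ≤ j) (hj2 : j ≤ n) (hij : i + 1 = j ∨ j + 1 = i)
    (h : occPos ι i 1 < occPos ι j 1) (s : ℕ) :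
    occPos ι j s < occPos ι i (s + 1) ∧ occPos ι i (s + 1) < occPos ι j (s + 1) := by
  induction s with
  | zero => exact ⟨occ_pos hadm hi1 hi2 0, h⟩
  | succ s ih =>
    have a := interlace_step hadm hadap hi1 hi2 hj1 hj2 hij ih.1 ih.2
    have b := interlace_step hadm hadap hj1 hj2 hi1 hi2 hij.symm ih.2 a
    exact ⟨a, b⟩

lemma interlace_p (hadm : Admissible n ι) (hadap : Adapted n (cartanA n) ι) {i j : ℕ}
    (hi1 : 1 ≤ i) (hi2 : i ≤ n) (hj1 : 1 ≤ j) (hj2 : j ≤ n) (hij : i + 1 = j ∨ j + 1 = i)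
    (s : ℕ) :
    occPos ι j (s + pval ι j i) < occPos ι i (s + 1) ∧
    occPos ι i (s + 1) < occPos ι j (s + pval ι j i + 1) ∧
    occPos ι j (s + pval ι j i + 1) < occPos ι i (s + 2) ∧
    occPos ι i (s + 2) < occPos ι j (s + pval ι j i + 2) := by
  unfold pval
  rw [firstOcc_eq, firstOcc_eq]
  split_ifs with h
  · have a := interlace hadm hadap hj1 hj2 hi1 hi2 hij.symm h
    exact ⟨(a s).2, (a (s + 1)).1, (a (s + 1)).2, (a (s + 2)).1⟩
  · have h' : occPos ι i 1 < occPos ι j 1 := by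
      have e1 := (occ_spec hadm hi1 hi2 0).2
      have e2 := (occ_spec hadm hj1 hj2 0).2
      rcases (not_lt.1 h).lt_or_eq with h | h
      · exact h
      · simp only [zero_add] at e1 e2
        rw [h] at e1
        omega
    have a := interlace hadm hadap hi1 hi2 hj1 hj2 hij h'
    exact ⟨(a s).1, (a s).2, (a (s + 1)).1, (a (s + 1)).2⟩

lemma pval_add (hadm : Admissible n ι) {i j : ℕ}
    (hi1 : 1 ≤ i) (hi2 : i ≤ n) (hj1 : 1 ≤ j) (hj2 : j ≤ n) (hij : i ≠ j) :
    pval ι i j + pval ι j i = 1 := by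
  unfold pval
  rw [firstOcc_eq, firstOcc_eq]
  have e1 := (occ_spec hadm hi1 hi2 0).2
  have e2 := (occ_spec hadm hj1 hj2 0).2
  have : occPos ι i 1 ≠ occPos ι j 1 := by
    intro h
    simp only [zero_add] at e1 e2
    rw [h] at e1
    omega
  split_ifs <;> omega

lemma sum_letter (hadm : Admissible n ι) (hadap : Adapted n (cartanA n) ι) {i j : ℕ}
    (hi1 : 1 ≤ i) (hi2 : i ≤ n) (hij : i + 1 = j ∨ j + 1 = i) (s : ℕ) :
    (∑ l ∈ Finset.Ioo (occPos ι i (s + 1)) (occPos ι i (s + 2)),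
      if ι l = j then xc l else 0) = xsj ι n ((s : ℤ) + 1 + pval ι j i) j := by
  by_cases hj : 1 ≤ j ∧ j ≤ n
  · obtain ⟨hj1, hj2⟩ := hj
    obtain ⟨a1, a2, a3, a4⟩ := interlace_p hadm hadap hi1 hi2 hj1 hj2 hij s
    have e : xsj ι n ((s : ℤ) + 1 + pval ι j i) j = xc (occPos ι j (s + pval ι j i + 1)) := by
      rw [xsj, if_pos ⟨by omega, hj1, hj2⟩]
      congr 2
      omega
    rw [e, Finset.sum_eq_single (occPos ι j (s + pval ι j i + 1))]
    · rw [if_pos (occ_spec hadm hj1 hj2 _).2]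
    · intro l hl hne
      rw [Finset.mem_Ioo] at hl
      rw [if_neg]
      intro h
      have b1 := occ_le (a1.trans hl.1) h
      have b2 := occ_le (lt_of_le_of_ne b1 (Ne.symm hne)) h
      exact absurd (b2.trans_lt hl.2) (not_lt.2 a4.le)
    · intro h
      exact absurd (Finset.mem_Ioo.2 ⟨a2, a3⟩) h
  · rw [xsj, if_neg (by tauto)]
    apply Finset.sum_eq_zero
    intro l hl
    rw [Finset.mem_Ioo] at hl
    rw [if_neg]
    intro h
    have := hadm.1 l (by omega)
    rw [h] at this
    exact hj this

lemma beta_occ (hadm : Admissible n ι) (hadap : Adapted n (cartanA n) ι) {j : ℕ}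
    (h1 : 1 ≤ j) (h2 : j ≤ n) (s : ℕ) :
    beta (cartanA n) ι (occPos ι j (s + 1)) =
      xsj ι n ((s : ℤ) + 1) j - xsj ι n ((s : ℤ) + 1 + pval ι (j + 1) j) (j + 1)
       - xsj ι n ((s : ℤ) + 1 + pval ι (j - 1) j) (j - 1) + xsj ι n ((s : ℤ) + 2) j := by
  have e1 : xsj ι n ((s : ℤ) + 1) j = xc (occPos ι j (s + 1)) := by
    rw [xsj, if_pos ⟨by omega, h1, h2⟩]; congr 1
  have e2 : xsj ι n ((s : ℤ) + 2) j = xc (occPos ι j (s + 2)) := by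
    rw [xsj, if_pos ⟨by omega, h1, h2⟩]; congr 1
  rw [beta, if_neg (occ_pos hadm h1 h2 s).ne', kplus_occ hadm h1 h2, (occ_spec hadm h1 h2 s).2,
    e1, e2, ← sum_letter hadm hadap h1 h2 (Or.inl rfl), ← sum_letter hadm hadap h1 h2
      (Or.inr (by omega : j - 1 + 1 = j))]
  have : (∑ l ∈ Finset.Ioo (occPos ι j (s + 1)) (occPos ι j (s + 2)),
      ((cartanA n j (ι l) : ℤ) : ℚ) • xc l) =
      -(∑ l ∈ Finset.Ioo (occPos ι j (s + 1)) (occPos ι j (s + 2)),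
        if ι l = j + 1 then xc l else 0)
      - (∑ l ∈ Finset.Ioo (occPos ι j (s + 1)) (occPos ι j (s + 2)),
        if ι l = j - 1 then xc l else 0) := by
    rw [← Finset.sum_neg_distrib, ← Finset.sum_sub_distrib]
    apply Finset.sum_congr rfl
    intro l hl
    rw [Finset.mem_Ioo] at hl
    have hne : ι l ≠ j := by
      intro h
      have := occ_le hl.1 h
      exact absurd hl.2 (not_lt.2 this)
    by_cases ha : ι l = j + 1
    · have hb : j + 1 ≠ j - 1 := by omega
      simp [cartanA, ha, hb]
    · by_cases hb : ι l = j - 1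
      · have h3 : j ≠ j - 1 := by omega
        have h4 : j - 1 + 1 = j := by omega
        have h5 : j - 1 ≠ j + 1 := by omega
        simp [cartanA, hb, h3, h4, h5]
      · have h3 : ¬ (j + 1 = ι l ∨ ι l + 1 = j) := by omega
        simp [cartanA, ha, hb, hne.symm, h3]
  rw [this]
  abel

lemma PABC_succ {j : ℕ} (h1 : 1 ≤ j) (h2 : j + 1 ≤ n) :
    PABC ι n (j + 1) = PABC ι n j + pval ι (j + 1) j := by
  rw [PABC, PABC, if_pos h2, if_pos (by omega), Finset.sum_Icc_succ_top (by omega)]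
  rfl

lemma pval_le (i j : ℕ) : pval ι i j ≤ 1 := by
  unfold pval; split_ifs <;> omega

lemma PABC_bound {i d : ℕ} (h1 : 1 ≤ i) (h2 : i + d ≤ n) :
    PABC ι n i ≤ PABC ι n (i + d) ∧ PABC ι n (i + d) ≤ PABC ι n i + d := by
  induction d with
  | zero => simp
  | succ d ih =>
    have := ih (by omega)
    have e := PABC_succ (ι := ι) (n := n) (j := i + d) (by omega) (by omega)
    have := pval_le (ι := ι) (i + d + 1) (i + d)
    rw [← add_assoc i d 1]
    omega

/-- `B_t(j) - β_{t+P(j),j} = B_t(j+1)`. -/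
lemma box_sub (hadm : Admissible n ι) (hadap : Adapted n (cartanA n) ι) {j : ℕ}
    (h1 : 1 ≤ j) (h2 : j ≤ n) (t : ℤ) (s : ℕ) (hs : (s : ℤ) + 1 = t + PABC ι n j) :
    boxA ι n t (j + 1) = boxA ι n t j - beta (cartanA n) ι (occPos ι j (s + 1)) := by
  rw [beta_occ hadm hadap h1 h2, boxA, boxA, Nat.add_sub_cancel]
  have e0 : (s : ℤ) + 2 = t + PABC ι n j + 1 := by omega
  have e1 : xsj ι n (t + PABC ι n (j + 1)) (j + 1)
      = xsj ι n ((s : ℤ) + 1 + pval ι (j + 1) j) (j + 1) := by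
    by_cases h : j + 1 ≤ n
    · rw [PABC_succ h1 h]
      congr 1
      push_cast
      omega
    · rw [xsj, xsj, if_neg (by omega), if_neg (by omega)]
  have e2 : xsj ι n (t + PABC ι n (j - 1) + 1) (j - 1)
      = xsj ι n ((s : ℤ) + 1 + pval ι (j - 1) j) (j - 1) := by
    by_cases h : 1 ≤ j - 1
    · obtain ⟨i, rfl⟩ : ∃ i, j = i + 1 := ⟨j - 1, by omega⟩
      rw [Nat.add_sub_cancel] at *
      have a := PABC_succ (ι := ι) (n := n) h h2
      have b := pval_add hadm (i := i) (j := i + 1) h (by omega) h1 h2 (by omega)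
      congr 1
      omega
    · rw [xsj, xsj, if_neg (by omega), if_neg (by omega)]
  rw [e0, e1, e2, hs]
  abel

lemma xsj_apply (hadm : Admissible n ι) {j : ℕ} (h1 : 1 ≤ j) (h2 : j ≤ n)
    {m : ℕ} (hm : 1 ≤ m) (t : ℤ) (e : ℕ) :
    xsj ι n t e (occPos ι j m) = if e = j ∧ t = m then 1 else 0 := by
  obtain ⟨m, rfl⟩ : ∃ i, m = i + 1 := ⟨m - 1, by omega⟩
  rw [xsj]
  split_ifs with ha hb hb
  · obtain ⟨rfl, rfl⟩ := hb
    simp [xc]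
  · simp only [xc, ite_eq_right_iff]
    intro h
    exfalso
    obtain ⟨r, rfl⟩ : ∃ r : ℕ, t = (r : ℤ) + 1 := ⟨(t - 1).toNat, by omega⟩
    have ht : ((r : ℤ) + 1).toNat = r + 1 := by omega
    rw [ht] at h
    have e1 := (occ_spec hadm h1 h2 m).2
    have e2 := (occ_spec hadm ha.2.1 ha.2.2 r).2
    rw [h] at e1
    obtain rfl : e = j := by omega
    have := (occ_strictMono hadm h1 h2).injective h
    apply hb
    refine ⟨rfl, ?_⟩
    push_cast
    omega
  · obtain ⟨rfl, rfl⟩ := hb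
    exfalso
    apply ha
    exact ⟨by push_cast; omega, h1, h2⟩
  · rfl

lemma box_apply (hadm : Admissible n ι) {j : ℕ} (h1 : 1 ≤ j) (h2 : j ≤ n)
    {m : ℕ} (hm : 1 ≤ m) (t : ℤ) {e : ℕ} (he : 1 ≤ e) :
    boxA ι n t e (occPos ι j m) =
      (if e = j ∧ (m : ℤ) = t + PABC ι n j then 1 else 0)
      - (if e = j + 1 ∧ (m : ℤ) = t + 1 + PABC ι n j then 1 else 0) := by
  rw [boxA, Pi.sub_apply, xsj_apply hadm h1 h2 hm, xsj_apply hadm h1 h2 hm]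
  congr 1
  · apply if_congr _ rfl rfl
    constructor
    · rintro ⟨rfl, h⟩; exact ⟨rfl, by omega⟩
    · rintro ⟨rfl, h⟩; exact ⟨rfl, by omega⟩
  · apply if_congr _ rfl rfl
    constructor
    · rintro ⟨h, h'⟩
      rw [h] at h'
      exact ⟨by omega, by omega⟩
    · rintro ⟨rfl, h⟩
      simp only [Nat.add_sub_cancel, true_and]
      omega

lemma tab_update (box : ℤ → ℕ → ℕ → ℚ) (s : ℤ) (k : ℕ) (jf : ℕ → ℕ) (i e : ℕ)
    (hi1 : 1 ≤ i) (hi2 : i ≤ k) :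
    tab box s k (Function.update jf i e) =
      tab box s k jf - box (s + k - i) (jf i) + box (s + k - i) e := by
  have hi : i ∈ Finset.Icc 1 k := Finset.mem_Icc.2 ⟨hi1, hi2⟩
  rw [tab, tab, ← Finset.add_sum_erase _ _ hi, ← Finset.add_sum_erase (Finset.Icc 1 k)
    (fun x => box (s + k - x) (jf x)) hi]
  have : ∑ x ∈ (Finset.Icc 1 k).erase i, box (s + k - x) (Function.update jf i e x)
      = ∑ x ∈ (Finset.Icc 1 k).erase i, box (s + k - x) (jf x) := by
    apply Finset.sum_congr rfl
    intro x hx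
    rw [Function.update_of_ne (Finset.ne_of_mem_erase hx)]
  rw [this, Function.update_self]
  abel

lemma jf_lt {k : ℕ} {jf : ℕ → ℕ} (hmono : ∀ i, 1 ≤ i → i < k → jf i < jf (i + 1))
    {a b : ℕ} (ha : 1 ≤ a) (hab : a < b) (hb : b ≤ k) : jf a < jf b := by
  induction b, hab using Nat.le_induction with
  | base => exact hmono a ha (by omega)
  | succ b hab ih => exact (ih (by omega)).trans (hmono b (by omega) (by omega))

lemma jf_inj {k : ℕ} {jf : ℕ → ℕ} (hmono : ∀ i, 1 ≤ i → i < k → jf i < jf (i + 1))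
    {a b : ℕ} (ha : 1 ≤ a) (hak : a ≤ k) (hb : 1 ≤ b) (hbk : b ≤ k) (h : jf a = jf b) :
    a = b := by
  rcases lt_trichotomy a b with hl | hl | hl
  · have := jf_lt hmono ha hl hbk; omega
  · exact hl
  · have := jf_lt hmono hb hl hak; omega

lemma jf_adj {k : ℕ} {jf : ℕ → ℕ} (hmono : ∀ i, 1 ≤ i → i < k → jf i < jf (i + 1))
    {a b : ℕ} (ha : 1 ≤ a) (hak : a ≤ k) (hb : 1 ≤ b) (hbk : b ≤ k) (h : jf b = jf a + 1) :
    b = a + 1 := by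
  rcases lt_trichotomy a b with hl | hl | hl
  · by_contra hne
    have h1 := hmono a ha (by omega)
    have h2 := jf_lt hmono (a := a + 1) (b := b) (by omega) (by omega) hbk
    omega
  · subst hl; omega
  · have := jf_lt hmono hb hl hak; omega

lemma jf_ge {k : ℕ} {jf : ℕ → ℕ} (hmono : ∀ i, 1 ≤ i → i < k → jf i < jf (i + 1))
    (h0 : 1 ≤ jf 1) {a : ℕ} (ha : 1 ≤ a) (hak : a ≤ k) : a ≤ jf a := by
  induction a, ha using Nat.le_induction with
  | base => exact h0
  | succ b hab ih =>
    have := ih (by omega)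
    have := hmono b hab (by omega)
    omega

end helpers

theorem SA_core (n : ℕ) (hn : 2 ≤ n) (ι : ℕ → ℕ)
    (hadm : Admissible n ι) (hadap : Adapted n (cartanA n) ι)
    (k : ℕ) (s : ℤ) (jf : ℕ → ℕ)
    (hk1 : 1 ≤ k) (hkn : k ≤ n)
    (hrange : ∀ i, 1 ≤ i → i ≤ k → 1 ≤ jf i ∧ jf i ≤ n + 1)
    (hmono : ∀ i, 1 ≤ i → i < k → jf i < jf (i + 1))
    (hs : 1 - (PABC ι n k : ℤ) ≤ s)
    (m : ℕ) (hm : 1 ≤ m) (j : ℕ) (hj1 : 1 ≤ j) (hjn : j ≤ n) :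
    (∀ i, 1 ≤ i → i ≤ k → jf i = j → (i < k → jf (i + 1) ≠ j + 1) →
        (m : ℤ) = s + (k : ℤ) - (i : ℤ) + (PABC ι n j : ℤ) →
        Ssj (cartanA n) ι m j (tab (boxA ι n) s k jf) =
          tab (boxA ι n) s k (Function.update jf i (j + 1))) ∧
    (∀ i, 1 ≤ i → i ≤ k → jf i = j + 1 → (1 < i → jf (i - 1) ≠ j) →
        (m : ℤ) = s + (k : ℤ) - (i : ℤ) + 1 + (PABC ι n j : ℤ) →
        Ssj (cartanA n) ι m j (tab (boxA ι n) s k jf) =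
          tab (boxA ι n) s k (Function.update jf i j)) ∧
    ((¬ ∃ i, 1 ≤ i ∧ i ≤ k ∧ jf i = j ∧ (i < k → jf (i + 1) ≠ j + 1) ∧
        (m : ℤ) = s + (k : ℤ) - (i : ℤ) + (PABC ι n j : ℤ)) →
     (¬ ∃ i, 1 ≤ i ∧ i ≤ k ∧ jf i = j + 1 ∧ (1 < i → jf (i - 1) ≠ j) ∧
        (m : ℤ) = s + (k : ℤ) - (i : ℤ) + 1 + (PABC ι n j : ℤ)) →
     Ssj (cartanA n) ι m j (tab (boxA ι n) s k jf) = tab (boxA ι n) s k jf) := by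
  have hcoef : tab (boxA ι n) s k jf (occPos ι j m) =
      (∑ i ∈ Finset.Icc 1 k, if jf i = j ∧ (m : ℤ) = s + k - i + PABC ι n j then (1 : ℚ) else 0)
      - ∑ i ∈ Finset.Icc 1 k,
        if jf i = j + 1 ∧ (m : ℤ) = s + k - i + 1 + PABC ι n j then (1 : ℚ) else 0 := by
    rw [tab, Finset.sum_apply, ← Finset.sum_sub_distrib]
    apply Finset.sum_congr rfl
    intro i hi
    rw [Finset.mem_Icc] at hi
    exact box_apply hadm hj1 hjn hm _ (hrange i hi.1 hi.2).1
  have hsum1 : ∀ i, 1 ≤ i → i ≤ k → ∀ e (c : ℕ → Prop) [DecidablePred c], jf i = e → c i →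
      (∑ i ∈ Finset.Icc 1 k, if jf i = e ∧ c i then (1 : ℚ) else 0) = 1 := by
    intro i hi1 hi2 e c _ he hc
    rw [Finset.sum_eq_single i]
    · rw [if_pos ⟨he, hc⟩]
    · intro b hb hne
      rw [Finset.mem_Icc] at hb
      rw [if_neg]
      rintro ⟨h, -⟩
      exact hne (jf_inj hmono hb.1 hb.2 hi1 hi2 (h.trans he.symm))
    · intro h
      exact absurd (Finset.mem_Icc.2 ⟨hi1, hi2⟩) h
  have hsum0 : ∀ e (c : ℕ → Prop) [DecidablePred c],
      (∀ i, 1 ≤ i → i ≤ k → jf i = e → ¬ c i) →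
      (∑ i ∈ Finset.Icc 1 k, if jf i = e ∧ c i then (1 : ℚ) else 0) = 0 := by
    intro e c _ h
    apply Finset.sum_eq_zero
    intro i hi
    rw [Finset.mem_Icc] at hi
    rw [if_neg]
    rintro ⟨h1, h2⟩
    exact h i hi.1 hi.2 h1 h2
  refine ⟨?_, ?_, ?_⟩
  · intro i hi1 hi2 hji hnext hmi
    rw [hsum1 i hi1 hi2 j (fun i => (m : ℤ) = s + k - i + PABC ι n j) hji hmi,
      hsum0 (j + 1) (fun i => (m : ℤ) = s + k - i + 1 + PABC ι n j)] at hcoef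
    · obtain ⟨r, rfl⟩ : ∃ r, m = r + 1 := ⟨m - 1, by omega⟩
      rw [Ssj, Sop, hcoef, if_pos (by norm_num), tab_update _ _ _ _ _ _ hi1 hi2, hji,
        box_sub hadm hadap hj1 hjn _ r (by push_cast at hmi; omega), sub_zero, one_smul]
      abel
    · intro b hb1 hb2 hb _
      have := jf_adj hmono hi1 hi2 hb1 hb2 (by omega)
      subst this
      exact hnext (by omega) hb
  · intro i hi1 hi2 hji hprev hmi
    rw [hsum1 i hi1 hi2 (j + 1) (fun i => (m : ℤ) = s + k - i + 1 + PABC ι n j) hji hmi,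
      hsum0 j (fun i => (m : ℤ) = s + k - i + PABC ι n j)] at hcoef
    · have hij : i ≤ j := by
        rcases Nat.lt_or_ge 1 i with h | h
        · have a := jf_ge hmono (hrange 1 le_rfl hk1).1 (a := i - 1) (by omega) (by omega)
          have b := hmono (i - 1) (by omega) (by omega)
          rw [Nat.sub_add_cancel hi1] at b
          have c := hprev h
          omega
        · omega
      have b1 := PABC_bound (ι := ι) (n := n) (i := i) (d := j - i) hi1 (by omega)
      have b2 := PABC_bound (ι := ι) (n := n) (i := i) (d := k - i) hi1 (by omega)
      rw [Nat.add_sub_cancel' hij] at b1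
      rw [Nat.add_sub_cancel' hi2] at b2
      obtain ⟨r, rfl⟩ : ∃ r, m = r + 2 := ⟨m - 2, by omega⟩
      have hb := box_sub hadm hadap hj1 hjn (s + k - i) r (by push_cast at hmi; omega)
      rw [Ssj, Sop, hcoef, if_neg (by norm_num), tab_update _ _ _ _ _ _ hi1 hi2, hji, hb,
        kminus_occ hadm hj1 hjn, zero_sub, neg_smul, one_smul]
      abel
    · intro b hb1 hb2 hb _
      have := jf_adj hmono hb1 hb2 hi1 hi2 (by omega)
      subst this
      exact hprev (by omega) hb
  · intro ha hb
    have h0 : tab (boxA ι n) s k jf (occPos ι j m) = 0 := by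
      by_cases h : ∃ i, 1 ≤ i ∧ i ≤ k ∧ jf i = j ∧ (m : ℤ) = s + k - i + PABC ι n j
      · obtain ⟨i, hi1, hi2, hji, hmi⟩ := h
        have hx : i < k ∧ jf (i + 1) = j + 1 := by
          by_contra hc
          exact ha ⟨i, hi1, hi2, hji, fun h1 h2 => hc ⟨h1, h2⟩, hmi⟩
        rw [hcoef, hsum1 i hi1 hi2 j (fun i => (m : ℤ) = s + k - i + PABC ι n j) hji hmi,
          hsum1 (i + 1) (by omega) hx.1 (j + 1)
            (fun i => (m : ℤ) = s + k - i + 1 + PABC ι n j) hx.2 (by push_cast; omega), sub_self]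
      · rw [hcoef, hsum0 j (fun i => (m : ℤ) = s + k - i + PABC ι n j),
          hsum0 (j + 1) (fun i => (m : ℤ) = s + k - i + 1 + PABC ι n j), sub_self]
        · intro i hi1 hi2 hji hmi
          have hx : 1 < i ∧ jf (i - 1) = j := by
            by_contra hc
            exact hb ⟨i, hi1, hi2, hji, fun h1 h2 => hc ⟨h1, h2⟩, hmi⟩
          exact h ⟨i - 1, by omega, by omega, hx.2, by omega⟩
        · intro i hi1 hi2 hji hmi
          exact h ⟨i, hi1, hi2, hji, hmi⟩
    rw [Ssj, Sop, h0]
    simp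

/-- Proposition 4.1: the explicit action of `S_{m,j}` on a type A tableau
`T = [j_1,…,j_k]^A_s ∈ Tab_{A,ι}`, and closure of `Tab_{A,ι}` under all `S_{m,j}`. -/
theorem SA_action (n : ℕ) (hn : 2 ≤ n) (ι : ℕ → ℕ)
    (hadm : Admissible n ι) (hadap : Adapted n (cartanA n) ι)
    (k : ℕ) (s : ℤ) (jf : ℕ → ℕ)
    (hk1 : 1 ≤ k) (hkn : k ≤ n)
    (hrange : ∀ i, 1 ≤ i → i ≤ k → 1 ≤ jf i ∧ jf i ≤ n + 1)
    (hmono : ∀ i, 1 ≤ i → i < k → jf i < jf (i + 1))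
    (hs : 1 - (PABC ι n k : ℤ) ≤ s)
    (m : ℕ) (hm : 1 ≤ m) (j : ℕ) (hj1 : 1 ≤ j) (hjn : j ≤ n) :
    (∀ i, 1 ≤ i → i ≤ k → jf i = j → (i < k → jf (i + 1) ≠ j + 1) →
        (m : ℤ) = s + (k : ℤ) - (i : ℤ) + (PABC ι n j : ℤ) →
        Ssj (cartanA n) ι m j (tab (boxA ι n) s k jf) =
          tab (boxA ι n) s k (Function.update jf i (j + 1))) ∧
    (∀ i, 1 ≤ i → i ≤ k → jf i = j + 1 → (1 < i → jf (i - 1) ≠ j) →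
        (m : ℤ) = s + (k : ℤ) - (i : ℤ) + 1 + (PABC ι n j : ℤ) →
        Ssj (cartanA n) ι m j (tab (boxA ι n) s k jf) =
          tab (boxA ι n) s k (Function.update jf i j)) ∧
    ((¬ ∃ i, 1 ≤ i ∧ i ≤ k ∧ jf i = j ∧ (i < k → jf (i + 1) ≠ j + 1) ∧
        (m : ℤ) = s + (k : ℤ) - (i : ℤ) + (PABC ι n j : ℤ)) →
     (¬ ∃ i, 1 ≤ i ∧ i ≤ k ∧ jf i = j + 1 ∧ (1 < i → jf (i - 1) ≠ j) ∧
        (m : ℤ) = s + (k : ℤ) - (i : ℤ) + 1 + (PABC ι n j : ℤ)) →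
     Ssj (cartanA n) ι m j (tab (boxA ι n) s k jf) = tab (boxA ι n) s k jf) ∧
    (∀ m' j', 1 ≤ m' → 1 ≤ j' → j' ≤ n →
      Ssj (cartanA n) ι m' j' (tab (boxA ι n) s k jf) ∈ TabA ι n) := by
  have core := fun m hm j hj1 hjn =>
    SA_core n hn ι hadm hadap k s jf hk1 hkn hrange hmono hs m hm j hj1 hjn
  obtain ⟨ha, hb, hc⟩ := core m hm j hj1 hjn
  refine ⟨ha, hb, hc, ?_⟩
  clear ha hb hc
  intro m' j' hm' hj1' hjn'
  obtain ⟨ha, hb, hc⟩ := core m' hm' j' hj1' hjn'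
  by_cases h1 : ∃ i, 1 ≤ i ∧ i ≤ k ∧ jf i = j' ∧ (i < k → jf (i + 1) ≠ j' + 1) ∧
        (m' : ℤ) = s + (k : ℤ) - (i : ℤ) + (PABC ι n j' : ℤ)
  · obtain ⟨i, hi1, hi2, hji, hnext, hmi⟩ := h1
    refine ⟨k, s, Function.update jf i (j' + 1), hk1, hkn, ?_, ?_, hs,
      ha i hi1 hi2 hji hnext hmi⟩
    · intro l hl1 hl2
      rcases eq_or_ne l i with rfl | hne
      · rw [Function.update_self]; omega
      · rw [Function.update_of_ne hne]; exact hrange l hl1 hl2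
    · intro l hl1 hl2
      have hlt := hmono l hl1 hl2
      rcases eq_or_ne l i with rfl | hne
      · rw [Function.update_self, Function.update_of_ne (by omega)]
        have := hnext hl2
        omega
      · rw [Function.update_of_ne hne]
        rcases eq_or_ne (l + 1) i with rfl | hne'
        · rw [Function.update_self]; omega
        · rw [Function.update_of_ne hne']; exact hlt
  by_cases h2 : ∃ i, 1 ≤ i ∧ i ≤ k ∧ jf i = j' + 1 ∧ (1 < i → jf (i - 1) ≠ j') ∧
        (m' : ℤ) = s + (k : ℤ) - (i : ℤ) + 1 + (PABC ι n j' : ℤ)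
  · obtain ⟨i, hi1, hi2, hji, hprev, hmi⟩ := h2
    refine ⟨k, s, Function.update jf i j', hk1, hkn, ?_, ?_, hs,
      hb i hi1 hi2 hji hprev hmi⟩
    · intro l hl1 hl2
      rcases eq_or_ne l i with rfl | hne
      · rw [Function.update_self]; omega
      · rw [Function.update_of_ne hne]; exact hrange l hl1 hl2
    · intro l hl1 hl2
      have hlt := hmono l hl1 hl2
      rcases eq_or_ne l i with rfl | hne
      · rw [Function.update_self, Function.update_of_ne (by omega)]
        omega
      · rw [Function.update_of_ne hne]
        rcases eq_or_ne (l + 1) i with rfl | hne'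
        · rw [Function.update_self]
          have := hprev (by omega)
          rw [Nat.add_sub_cancel] at this
          omega
        · rw [Function.update_of_ne hne']; exact hlt
  exact ⟨k, s, jf, hk1, hkn, hrange, hmono, hs, hc h1 h2⟩
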